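/- Let s be a Sturmian word, i.e., an infinite word over {0,1} with p_s(n) = n+1 for all n ≥ 0. Then there exist languages S_1 and S_2, each containing at most 2 words of each length n ≥ 1, such that every factor of s belongs to S_1 · S_2; in particular s ∈ 𝓦_2. Concretely, one may take S_1 = {va : a ∈ {0,1}, v a right special factor of s} ∪ {ε} and S_2 = {av : a ∈ {0,1}, v a left special factor of s} ∪ {ε}. -/

import Mathlib

/-- The factor of the infinite word `u` of length `n` starting at position `i`. -/
def wordSeg {α : Type*} (u : ℕ → α) (i n : ℕ) : List α :=
  (List.range n).map (fun t => u (i + t))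

/-- The set of (finite) factors of the infinite word `u`. -/
def Factors {α : Type*} (u : ℕ → α) : Set (List α) :=
  {w | ∃ i, w = wordSeg u i w.length}

/-- Subword complexity: the number of distinct factors of `u` of length `n`. -/
noncomputable def complexity {α : Type*} (u : ℕ → α) (n : ℕ) : ℕ :=
  {w : List α | w.length = n ∧ w ∈ Factors u}.ncard

/-- `p_L(n)`: the number of words of length `n` in the language `L`. -/
noncomputable def langComplexity {α : Type*} (L : Set (List α)) (n : ℕ) : ℕ :=
  {w ∈ L | w.length = n}.ncard

/-- `v` is a right special factor of `u`. -/
def RightSpecial {α : Type*} (u : ℕ → α) (v : List α) : Prop :=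
  ∃ a b : α, a ≠ b ∧ (v ++ [a]) ∈ Factors u ∧ (v ++ [b]) ∈ Factors u

/-- `v` is a left special factor of `u`. -/
def LeftSpecial {α : Type*} (u : ℕ → α) (v : List α) : Prop :=
  ∃ a b : α, a ≠ b ∧ (a :: v) ∈ Factors u ∧ (b :: v) ∈ Factors u

/-!
Order the factors of length `n` of a Sturmian word `s` lexicographically, and let `W w` be the sum
over the prefixes of `w` of their numbers of ones. Balance says that `y ≤ x` whenever `0x` and `1y`
are equally long factors, that is, removing the first letters that differ reverses the order. As
`W (v1y) - W (v0x) = |0x| - (W x - W y)`, induction shows that this difference lies between `1` and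
`n`. So `W` is injective on the factors of length `n` and takes its values in an interval of `n + 1`
integers. There are `n + 1` factors, so all these integers are attained, and for `n ≥ 1` every
factor `w` has a neighbour `w'` with `W w' = W w ± 1`. The formula shows that such a pair is
`{v0, v1}` or `{v01z, v10z}`. In both cases `v` is right special, and in the second one `z` is left
special, so `w = (va)ε` or `w = (va)(āz)`.

Balance itself comes from the fact that in every window of `n + 1` positions a right special factor
of length `n` begins: if `0w0` and `1w1` are factors, this produces a shorter such word.
-/

section Factors

variable {α : Type*} {u : ℕ → α}

@[simp]
lemma length_wordSeg (i n : ℕ) : (wordSeg u i n).length = n := by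
  simp [wordSeg]

lemma wordSeg_add (i m n : ℕ) :
    wordSeg u i (m + n) = wordSeg u i m ++ wordSeg u (i + m) n := by
  simp [wordSeg, List.range_add, add_assoc]

lemma wordSeg_one (i : ℕ) : wordSeg u i 1 = [u i] := by
  simp [wordSeg]

lemma wordSeg_mem_factors (i n : ℕ) : wordSeg u i n ∈ Factors u :=
  ⟨i, by rw [length_wordSeg]⟩

lemma mem_factors_of_infix {v w : List α} (hw : w ∈ Factors u) (h : v <:+: w) :
    v ∈ Factors u := by
  obtain ⟨x, y, rfl⟩ := h
  obtain ⟨i, hi⟩ := hw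
  rw [List.length_append, List.length_append, wordSeg_add, wordSeg_add] at hi
  obtain ⟨hxv, -⟩ := List.append_inj hi (by simp)
  exact ⟨i + x.length, (List.append_inj hxv (by simp)).2⟩

lemma RightSpecial.of_append {x v : List α} (h : RightSpecial u (x ++ v)) :
    RightSpecial u v := by
  obtain ⟨a, b, hab, ha, hb⟩ := h
  exact ⟨a, b, hab, mem_factors_of_infix ha ⟨x, [], by simp⟩,
    mem_factors_of_infix hb ⟨x, [], by simp⟩⟩

/-- The set of factors of length `n` of the infinite word `u`, whose cardinality is
`complexity u n`. -/
def factorsOfLength (u : ℕ → α) (n : ℕ) : Set (List α) :=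
  {w | w.length = n ∧ w ∈ Factors u}

lemma wordSeg_mem_factorsOfLength (i n : ℕ) : wordSeg u i n ∈ factorsOfLength u n :=
  ⟨length_wordSeg i n, wordSeg_mem_factors i n⟩

lemma factorsOfLength_eq_range (n : ℕ) :
    factorsOfLength u n = Set.range fun i => wordSeg u i n := by
  ext w
  constructor
  · rintro ⟨rfl, i, hi⟩
    exact ⟨i, hi.symm⟩
  · rintro ⟨i, rfl⟩
    exact wordSeg_mem_factorsOfLength i n

lemma finite_factorsOfLength [Finite α] (n : ℕ) : (factorsOfLength u n).Finite :=
  (List.finite_length_eq α n).subset fun _ h => h.1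

lemma exists_append_mem_factors {w : List α} (hw : w ∈ Factors u) : ∃ a, w ++ [a] ∈ Factors u := by
  obtain ⟨i, hi⟩ := hw
  refine ⟨u (i + w.length), ?_⟩
  have h := wordSeg_mem_factors (u := u) i (w.length + 1)
  rwa [wordSeg_add, wordSeg_one, ← hi] at h

lemma complexity_add_ncard_rightSpecial_le [Finite α] (n : ℕ) :
    complexity u n + {v | v.length = n ∧ RightSpecial u v}.ncard ≤ complexity u (n + 1) := by
  set R := {v | v.length = n ∧ RightSpecial u v}
  have hR : R.Finite := (List.finite_length_eq α n).subset fun _ h => h.1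
  have hext : ∀ v ∈ factorsOfLength u n, ∃ a, v ++ [a] ∈ Factors u :=
    fun v hv => exists_append_mem_factors hv.2
  have : Nonempty α := ⟨u 0⟩
  choose! f hf using hext
  have hother : ∀ v ∈ R, ∃ a, a ≠ f v ∧ v ++ [a] ∈ Factors u := by
    rintro v ⟨-, a, b, hab, ha, hb⟩
    by_cases hfa : a = f v
    · exact ⟨b, fun hb' => hab (hfa.trans hb'.symm), hb⟩
    · exact ⟨a, hfa, ha⟩
  choose! g hgf hg using hother
  have hinj (e : List α → α) : Function.Injective fun v => v ++ [e v] :=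
    fun v w h => (List.append_inj' h rfl).1
  have hdisj : Disjoint ((fun v => v ++ [f v]) '' factorsOfLength u n)
      ((fun v => v ++ [g v]) '' R) := by
    rw [Set.disjoint_left]
    rintro _ ⟨v, -, rfl⟩ ⟨w, hw, h⟩
    obtain ⟨rfl, hgw⟩ := List.append_inj' h rfl
    exact hgf w hw (List.singleton_inj.mp hgw)
  calc complexity u n + R.ncard
      = ((fun v => v ++ [f v]) '' factorsOfLength u n ∪ (fun v => v ++ [g v]) '' R).ncard := by
        rw [Set.ncard_union_eq hdisj ((finite_factorsOfLength n).image _) (hR.image _),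
          Set.ncard_image_of_injective _ (hinj f), Set.ncard_image_of_injective _ (hinj g)]
        rfl
    _ ≤ (factorsOfLength u (n + 1)).ncard := by
        refine Set.ncard_le_ncard (Set.union_subset ?_ ?_) (finite_factorsOfLength _)
        · rintro _ ⟨v, hv, rfl⟩
          exact ⟨by simp [hv.1], hf v hv⟩
        · rintro _ ⟨v, hv, rfl⟩
          exact ⟨by simp [hv.1], hg v hv⟩

end Factors

section Recurrence

variable {α : Type*} {u : ℕ → α}

lemma wordSeg_eq_of_not_rightSpecial {i j m n : ℕ} (h : wordSeg u i n = wordSeg u j n)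
    (hns : ∀ k < m, ¬ RightSpecial u (wordSeg u (i + k) n)) :
    wordSeg u i (m + n) = wordSeg u j (m + n) := by
  induction m with
  | zero => simpa only [zero_add] using h
  | succ m ih =>
    have hmn := ih fun k hk => hns k (hk.trans m.lt_succ_self)
    have hsuffix : wordSeg u (i + m) n = wordSeg u (j + m) n := by
      rw [wordSeg_add, wordSeg_add] at hmn
      exact (List.append_inj hmn (by simp)).2
    have hnext : u (i + m + n) = u (j + m + n) := by
      by_contra hne
      refine hns m m.lt_succ_self ⟨_, _, hne, ?_, ?_⟩
      · rw [← wordSeg_one, ← wordSeg_add]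
        exact wordSeg_mem_factors _ _
      · rw [hsuffix, ← wordSeg_one, ← wordSeg_add]
        exact wordSeg_mem_factors _ _
    rw [add_right_comm, wordSeg_add, wordSeg_add j, hmn, wordSeg_one, wordSeg_one,
      ← add_assoc, ← add_assoc, hnext]

lemma exists_rightSpecial_wordSeg_add [Finite α] (hu : ¬ BddAbove (Set.range (complexity u)))
    (i n : ℕ) : ∃ k, RightSpecial u (wordSeg u (i + k) n) := by
  by_contra! hns
  refine hu ⟨i + complexity u n, ?_⟩
  rintro _ ⟨N, rfl⟩
  -- Past position `i` the first `n` letters of a factor determine all the others.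
  have hdet : Function.FactorsThrough (fun k => wordSeg u (i + k) N)
      (fun k => wordSeg u (i + k) n) := by
    intro k l hkl
    have h := wordSeg_eq_of_not_rightSpecial (m := N) hkl fun j _ => by
      rw [add_assoc]
      exact hns _
    rw [wordSeg_add, wordSeg_add] at h
    exact (List.append_inj h (by simp)).1
  set e := Function.extend (fun k => wordSeg u (i + k) n) (fun k => wordSeg u (i + k) N) id
  have hcover : factorsOfLength u N ⊆
      (fun k => wordSeg u k N) '' Set.Iio i ∪ e '' factorsOfLength u n := by
    rw [factorsOfLength_eq_range]
    rintro _ ⟨k, rfl⟩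
    rcases lt_or_ge k i with hk | hk
    · exact Or.inl ⟨k, hk, rfl⟩
    · obtain ⟨l, rfl⟩ := Nat.exists_eq_add_of_le hk
      exact Or.inr ⟨_, wordSeg_mem_factorsOfLength _ _, hdet.extend_apply id l⟩
  calc complexity u N
      ≤ ((fun k => wordSeg u k N) '' Set.Iio i ∪ e '' factorsOfLength u n).ncard :=
        Set.ncard_le_ncard hcover
          (((Set.finite_Iio i).image _).union ((finite_factorsOfLength n).image _))
    _ ≤ ((fun k => wordSeg u k N) '' Set.Iio i).ncard + (e '' factorsOfLength u n).ncard :=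
        Set.ncard_union_le _ _
    _ ≤ (Set.Iio i).ncard + (factorsOfLength u n).ncard :=
        add_le_add (Set.ncard_image_le (Set.finite_Iio i))
          (Set.ncard_image_le (finite_factorsOfLength n))
    _ = i + complexity u n := by
        rw [Set.ncard_Iio_nat]
        rfl

lemma exists_lt_complexity_rightSpecial [Finite α] (hu : ¬ BddAbove (Set.range (complexity u)))
    (i n : ℕ) : ∃ k < complexity u n, RightSpecial u (wordSeg u (i + k) n) := by
  classical
  have hex := exists_rightSpecial_wordSeg_add hu i n
  set k := Nat.find hex
  have hk : RightSpecial u (wordSeg u (i + k) n) := Nat.find_spec hex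
  have hmin : ∀ l < k, ¬ RightSpecial u (wordSeg u (i + l) n) := fun l => Nat.find_min hex
  have hinj : Set.InjOn (fun l => wordSeg u (i + l) n) (Set.Iic k) := by
    intro x hx y hy hxy
    by_contra! hne
    wlog hlt : x < y generalizing x y
    · exact this hy hx hxy.symm hne.symm (by omega)
    -- The loop from `x` to `y` would bring the first right special factor forward.
    have hyk : y ≤ k := hy
    have hshift := wordSeg_eq_of_not_rightSpecial (m := k - y) hxy fun l hl => by
      rw [add_assoc]
      exact hmin _ (by omega)
    rw [wordSeg_add, wordSeg_add, add_assoc, add_assoc, Nat.add_sub_cancel' hyk] at hshift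
    refine hmin (x + (k - y)) (by omega) ?_
    rwa [(List.append_inj hshift (by simp)).2]
  refine ⟨k, ?_, hk⟩
  rw [Nat.lt_iff_add_one_le, ← Set.ncard_Iic_nat k]
  exact Set.ncard_le_ncard_of_injOn _ (fun l _ => wordSeg_mem_factorsOfLength _ _) hinj
    (finite_factorsOfLength n)

end Recurrence

section Sturmian

/-- A Sturmian word: a binary word with exactly `n + 1` factors of each length `n`. -/
def IsSturmian (s : ℕ → Bool) : Prop :=
  ∀ n, complexity s n = n + 1

/-- Balanced binary words, encoded by the absence of a word `w` for which both `0w0` and `1w1` are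
factors; this is equivalent to requiring that the numbers of ones in any two factors of the same
length differ by at most one. -/
def IsBalanced (u : ℕ → Bool) : Prop :=
  ∀ w, ¬ ∀ a, a :: (w ++ [a]) ∈ Factors u

variable {u s : ℕ → Bool}

lemma rightSpecial_iff_forall {v : List Bool} : RightSpecial u v ↔ ∀ a, v ++ [a] ∈ Factors u := by
  constructor
  · rintro ⟨_ | _, _ | _, hab, ha, hb⟩ (_ | _) <;> first | assumption | exact absurd rfl hab
  · exact fun h => ⟨false, true, by simp, h _, h _⟩

lemma leftSpecial_iff_forall {v : List Bool} : LeftSpecial u v ↔ ∀ a, a :: v ∈ Factors u := by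
  constructor
  · rintro ⟨_ | _, _ | _, hab, ha, hb⟩ (_ | _) <;> first | assumption | exact absurd rfl hab
  · exact fun h => ⟨false, true, by simp, h _, h _⟩

lemma IsSturmian.not_bddAbove_complexity (hs : IsSturmian s) :
    ¬ BddAbove (Set.range (complexity s)) := by
  rintro ⟨C, hC⟩
  have h : complexity s C ≤ C := hC ⟨C, rfl⟩
  rw [hs C] at h
  exact Nat.not_succ_le_self C h

lemma IsSturmian.rightSpecial_unique (hs : IsSturmian s) {v w : List Bool}
    (hv : RightSpecial s v) (hw : RightSpecial s w) (hl : v.length = w.length) : v = w := by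
  have hcard := complexity_add_ncard_rightSpecial_le (u := s) w.length
  rw [hs, hs, add_le_add_iff_left] at hcard
  have hfin : {x | x.length = w.length ∧ RightSpecial s x}.Finite :=
    (List.finite_length_eq Bool w.length).subset fun _ h => h.1
  exact (Set.ncard_le_one hfin).mp hcard v ⟨hl, hv⟩ w ⟨rfl, hw⟩

lemma exists_overlap_of_append_cons_eq {α : Type*} {w x z : List α} {a b : α} (hab : a ≠ b)
    (h : w ++ b :: z = x ++ a :: w) (hx : x.length ≤ w.length) :
    ∃ t, t.length < w.length ∧ a :: t <:+ w ∧ t ++ [b] <+: w := by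
  obtain ⟨c, rfl⟩ : x <+: w :=
    List.prefix_of_prefix_length_le ⟨_, h.symm⟩ (List.prefix_append w (b :: z)) hx
  rw [List.append_assoc, List.append_cancel_left_eq] at h
  cases c with
  | nil => exact absurd (List.cons.inj h).1.symm hab
  | cons d t =>
    rw [List.cons_append] at h
    obtain ⟨rfl, ht⟩ := List.cons.inj h
    refine ⟨t, ?_, List.suffix_append _ _, z, ?_⟩
    · simp only [List.length_append, List.length_cons]
      omega
    · rw [← ht, List.append_assoc, List.singleton_append]

lemma IsSturmian.exists_cons_rightSpecial (hs : IsSturmian s) {w : List Bool}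
    (hw : RightSpecial s w) : ∃ d, RightSpecial s (d :: w) := by
  obtain ⟨k, -, hk⟩ :=
    exists_lt_complexity_rightSpecial hs.not_bddAbove_complexity 0 (1 + w.length)
  rw [wordSeg_add, wordSeg_one] at hk
  exact ⟨_, hs.rightSpecial_unique hk.of_append hw (by simp) ▸ hk⟩

/-- An occurrence of `dw` begins in the window of `|w| + 2` positions covered by `d̄wd̄`, and not at
either end of it, so the two occurrences of `w` overlap. -/
lemma IsSturmian.exists_overlap (hs : IsSturmian s) {w : List Bool} {d : Bool}
    (hd : RightSpecial s (d :: w)) (hw : (!d) :: (w ++ [!d]) ∈ Factors s) :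
    ∃ t, t.length < w.length ∧ d :: t <:+ w ∧ t ++ [!d] <+: w := by
  obtain ⟨i, hi⟩ := hw
  obtain ⟨k, hkw, hk⟩ :=
    exists_lt_complexity_rightSpecial hs.not_bddAbove_complexity i (1 + w.length)
  have hkd := hs.rightSpecial_unique hk hd (by simp [add_comm])
  rw [hs] at hkw
  rw [show ((!d) :: (w ++ [!d])).length = 1 + (w.length + 1) by simp [add_comm], wordSeg_add,
    wordSeg_one] at hi
  obtain ⟨hi_first, hi_rest⟩ := List.cons.inj hi
  cases k with
  | zero =>
    rw [wordSeg_add, wordSeg_one] at hkd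
    exact absurd (hi_first.trans (List.cons.inj hkd).1) (by simp)
  | succ k =>
    refine exists_overlap_of_append_cons_eq (x := wordSeg s (i + 1) k)
      (z := wordSeg s (i + 1 + (w.length + 1)) k) (by simp) ?_ (by simpa using by omega)
    calc w ++ (!d) :: wordSeg s (i + 1 + (w.length + 1)) k
        = (w ++ [!d]) ++ wordSeg s (i + 1 + (w.length + 1)) k := by simp
      _ = wordSeg s (i + 1) ((w.length + 1) + k) := by rw [wordSeg_add, hi_rest]; rfl
      _ = wordSeg s (i + 1) (k + (1 + w.length)) := by congr 1; omega
      _ = wordSeg s (i + 1) k ++ d :: w := by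
        rw [wordSeg_add, ← hkd, add_assoc i, add_comm 1 k]

theorem IsSturmian.isBalanced (hs : IsSturmian s) : IsBalanced s := by
  intro w
  induction hn : w.length using Nat.strong_induction_on generalizing w with
  | _ n ih =>
    subst hn
    intro hw
    have hwr : RightSpecial s w :=
      rightSpecial_iff_forall.mpr fun a => mem_factors_of_infix (hw a) ⟨[a], [], by simp⟩
    obtain ⟨d, hd⟩ := hs.exists_cons_rightSpecial hwr
    obtain ⟨t, ht, ⟨x, hx⟩, ⟨z, hz⟩⟩ := hs.exists_overlap hd (hw !d)
    refine ih t.length ht t rfl fun a => ?_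
    rcases Bool.eq_or_eq_not a d with rfl | rfl
    · exact mem_factors_of_infix (hw a) ⟨a :: x, [], by simp [← hx]⟩
    · exact mem_factors_of_infix (hw !d) ⟨[], z ++ [!d], by simp [← hz]⟩

end Sturmian

section Balanced

variable {u : ℕ → Bool}

lemma exists_eq_append_cons_of_lt {α : Type*} [LT α] {x y : List α} (hl : x.length = y.length)
    (h : x < y) : ∃ t a b x' y', a < b ∧ x = t ++ a :: x' ∧ y = t ++ b :: y' := by
  induction x generalizing y with
  | nil => simp [List.length_eq_zero_iff.mp hl.symm] at h
  | cons a x ih =>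
    obtain ⟨b, y, rfl⟩ := List.exists_cons_of_length_eq_add_one hl.symm
    rcases List.cons_lt_cons_iff.mp h with hab | ⟨rfl, hxy⟩
    · exact ⟨[], a, b, x, y, hab, rfl, rfl⟩
    · obtain ⟨t, c, d, x', y', hcd, rfl, rfl⟩ := ih (Nat.succ_injective hl) hxy
      exact ⟨a :: t, c, d, x', y', hcd, rfl, rfl⟩

lemma IsBalanced.le_of_cons_mem (hu : IsBalanced u) {x y : List Bool} (hl : x.length = y.length)
    (hx : false :: x ∈ Factors u) (hy : true :: y ∈ Factors u) : y ≤ x := by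
  by_contra! hlt
  obtain ⟨t, a, b, x', y', hab, rfl, rfl⟩ := exists_eq_append_cons_of_lt hl hlt
  obtain ⟨rfl, rfl⟩ := Bool.lt_iff.mp hab
  refine hu t fun c => ?_
  cases c
  · exact mem_factors_of_infix hx ⟨[], x', by simp⟩
  · exact mem_factors_of_infix hy ⟨[], y', by simp⟩

lemma IsBalanced.leftSpecial_unique (hu : IsBalanced u) {v w : List Bool}
    (hv : LeftSpecial u v) (hw : LeftSpecial u w) (hl : v.length = w.length) : v = w := by
  rw [leftSpecial_iff_forall] at hv hw
  exact le_antisymm (hu.le_of_cons_mem hl.symm (hw _) (hv _)) (hu.le_of_cons_mem hl (hv _) (hw _))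

/-- The sum, over the prefixes of a binary word, of their numbers of ones. It measures how far up a
factor of a balanced word stands among the factors of its length. -/
def sumPrefixOnes (w : List Bool) : ℕ :=
  (w.inits.map (List.count true)).sum

@[simp]
lemma sumPrefixOnes_false_cons (w : List Bool) : sumPrefixOnes (false :: w) = sumPrefixOnes w := by
  simp [sumPrefixOnes, Function.comp_def]

@[simp]
lemma sumPrefixOnes_true_cons (w : List Bool) :
    sumPrefixOnes (true :: w) = sumPrefixOnes w + (w.length + 1) := by
  simp [sumPrefixOnes, Function.comp_def, List.sum_map_add]

lemma IsBalanced.sumPrefixOnes_bounds_of_lt (hu : IsBalanced u) {x y : List Bool}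
    (hl : x.length = y.length) (hx : x ∈ Factors u) (hy : y ∈ Factors u) (h : x < y) :
    sumPrefixOnes x < sumPrefixOnes y ∧ sumPrefixOnes y ≤ sumPrefixOnes x + x.length := by
  induction hn : x.length generalizing x y with
  | zero =>
    rw [List.length_eq_zero_iff.mp hn, List.length_eq_zero_iff.mp (hl.symm.trans hn)] at h
    exact absurd h (lt_irrefl _)
  | succ n ih =>
    obtain ⟨a, x, rfl⟩ := List.exists_cons_of_length_eq_add_one hn
    obtain ⟨b, y, rfl⟩ := List.exists_cons_of_length_eq_add_one (hl.symm.trans hn)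
    have hxt : x ∈ Factors u := mem_factors_of_infix hx ⟨[a], [], by simp⟩
    have hyt : y ∈ Factors u := mem_factors_of_infix hy ⟨[b], [], by simp⟩
    simp only [List.length_cons, add_left_inj] at hl hn
    rw [List.cons_lt_cons_iff, Bool.lt_iff] at h
    rcases h with ⟨rfl, rfl⟩ | ⟨rfl, hlt⟩
    · rw [sumPrefixOnes_false_cons, sumPrefixOnes_true_cons]
      rcases (hu.le_of_cons_mem hl hx hy).eq_or_lt with rfl | hlt
      · omega
      · have := ih hl.symm hyt hxt hlt (hl.symm.trans hn)
        omega
    · have := ih hl hxt hyt hlt hn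
      cases a <;> simp only [sumPrefixOnes_false_cons, sumPrefixOnes_true_cons] <;> omega

lemma IsBalanced.injOn_sumPrefixOnes (hu : IsBalanced u) (n : ℕ) :
    Set.InjOn sumPrefixOnes (factorsOfLength u n) := by
  rintro x ⟨hxn, hx⟩ y ⟨hyn, hy⟩ hxy
  rcases lt_trichotomy x y with h | h | h
  · exact absurd hxy (hu.sumPrefixOnes_bounds_of_lt (hxn.trans hyn.symm) hx hy h).1.ne
  · exact h
  · exact absurd hxy (hu.sumPrefixOnes_bounds_of_lt (hyn.trans hxn.symm) hy hx h).1.ne'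

lemma IsBalanced.sumPrefixOnes_le_add_length (hu : IsBalanced u) {x y : List Bool}
    (hl : x.length = y.length) (hx : x ∈ Factors u) (hy : y ∈ Factors u) :
    sumPrefixOnes y ≤ sumPrefixOnes x + x.length := by
  rcases lt_trichotomy x y with h | rfl | h
  · exact (hu.sumPrefixOnes_bounds_of_lt hl hx hy h).2
  · exact Nat.le_add_right _ _
  · exact (hu.sumPrefixOnes_bounds_of_lt hl.symm hy hx h).1.le.trans (Nat.le_add_right _ _)

/-- The relation between two binary words that are equal up to the last letter, or up to the
transposition of two distinct adjacent letters: it relates neighbouring factors of the same length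
of a Sturmian word. -/
def IsSwap (x y : List Bool) : Prop :=
  ∃ v a, (x = v ++ [a] ∧ y = v ++ [!a]) ∨
    ∃ z, x = v ++ a :: (!a) :: z ∧ y = v ++ (!a) :: a :: z

lemma IsSwap.symm {x y : List Bool} (h : IsSwap x y) : IsSwap y x := by
  obtain ⟨v, a, ⟨rfl, rfl⟩ | ⟨z, rfl, rfl⟩⟩ := h
  · exact ⟨v, !a, Or.inl ⟨rfl, by rw [Bool.not_not]⟩⟩
  · exact ⟨v, !a, Or.inr ⟨z, by rw [Bool.not_not], by rw [Bool.not_not]⟩⟩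

lemma IsSwap.cons {x y : List Bool} (c : Bool) (h : IsSwap x y) : IsSwap (c :: x) (c :: y) := by
  obtain ⟨v, a, ⟨rfl, rfl⟩ | ⟨z, rfl, rfl⟩⟩ := h
  · exact ⟨c :: v, a, Or.inl ⟨rfl, rfl⟩⟩
  · exact ⟨c :: v, a, Or.inr ⟨z, rfl, rfl⟩⟩

lemma IsBalanced.isSwap_false_cons_true_cons (hu : IsBalanced u) {x y : List Bool}
    (hl : x.length = y.length) (hx : false :: x ∈ Factors u) (hy : true :: y ∈ Factors u)
    (h : sumPrefixOnes x = sumPrefixOnes y + y.length) : IsSwap (false :: x) (true :: y) := by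
  cases x with
  | nil =>
    obtain rfl : y = [] := List.length_eq_zero_iff.mp hl.symm
    exact ⟨[], false, Or.inl ⟨rfl, rfl⟩⟩
  | cons a x =>
    obtain ⟨b, y, rfl⟩ := List.exists_cons_of_length_eq_add_one hl.symm
    have hxt : x ∈ Factors u := mem_factors_of_infix hx ⟨[false, a], [], by simp⟩
    have hyt : y ∈ Factors u := mem_factors_of_infix hy ⟨[true, b], [], by simp⟩
    simp only [List.length_cons, add_left_inj] at hl h
    have hbound := hu.sumPrefixOnes_le_add_length hl.symm hyt hxt
    obtain ⟨rfl, rfl⟩ : a = true ∧ b = false := by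
      cases a <;> cases b <;> grind [sumPrefixOnes_false_cons, sumPrefixOnes_true_cons]
    rw [sumPrefixOnes_false_cons, sumPrefixOnes_true_cons, hl, add_left_inj] at h
    obtain rfl := hu.injOn_sumPrefixOnes x.length ⟨rfl, hxt⟩ ⟨hl.symm, hyt⟩ h
    exact ⟨[], false, Or.inr ⟨x, rfl, rfl⟩⟩

lemma IsBalanced.isSwap_of_sumPrefixOnes_eq_add_one (hu : IsBalanced u) {x y : List Bool}
    (hl : x.length = y.length) (hx : x ∈ Factors u) (hy : y ∈ Factors u)
    (h : sumPrefixOnes y = sumPrefixOnes x + 1) : IsSwap x y := by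
  induction x generalizing y with
  | nil => simp [List.length_eq_zero_iff.mp hl.symm] at h
  | cons a x ih =>
    obtain ⟨b, y, rfl⟩ := List.exists_cons_of_length_eq_add_one hl.symm
    have hxt : x ∈ Factors u := mem_factors_of_infix hx ⟨[a], [], by simp⟩
    have hyt : y ∈ Factors u := mem_factors_of_infix hy ⟨[b], [], by simp⟩
    simp only [List.length_cons, add_left_inj] at hl
    have hbound := hu.sumPrefixOnes_le_add_length hl hxt hyt
    obtain rfl | ⟨rfl, rfl⟩ : a = b ∨ a = false ∧ b = true := by
      cases a <;> cases b <;> grind [sumPrefixOnes_false_cons, sumPrefixOnes_true_cons]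
    · refine (ih hl hxt hyt ?_).cons a
      cases a <;> simp only [sumPrefixOnes_false_cons, sumPrefixOnes_true_cons] at h <;> omega
    · refine hu.isSwap_false_cons_true_cons hl hx hy ?_
      rw [sumPrefixOnes_false_cons, sumPrefixOnes_true_cons] at h
      omega

end Balanced

section Factorization

lemma exists_eq_Icc_of_ncard_eq {A : Set ℕ} {n : ℕ} (hA : A.ncard = n + 1)
    (hdiam : ∀ x ∈ A, ∀ y ∈ A, y ≤ x + n) : ∃ m, A = Set.Icc m (m + n) := by
  have hmin : sInf A ∈ A := Nat.sInf_mem (Set.nonempty_of_ncard_ne_zero (by omega))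
  refine ⟨sInf A, Set.eq_of_subset_of_ncard_le (fun x hx => ?_) ?_⟩
  · exact ⟨Nat.sInf_le hx, hdiam _ hmin x hx⟩
  · rw [Set.ncard_Icc_nat, hA]
    omega

lemma IsSturmian.exists_isSwap {s : ℕ → Bool} (hs : IsSturmian s) {w : List Bool}
    (hw : w ∈ Factors s) (hne : w ≠ []) : ∃ w' ∈ Factors s, IsSwap w w' := by
  have hb : IsBalanced s := hs.isBalanced
  obtain ⟨m, hm⟩ : ∃ m, sumPrefixOnes '' factorsOfLength s w.length = Set.Icc m (m + w.length) := by
    refine exists_eq_Icc_of_ncard_eq ?_ ?_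
    · rw [(hb.injOn_sumPrefixOnes _).ncard_image]
      exact hs w.length
    · rintro _ ⟨x, ⟨hxw, hx⟩, rfl⟩ _ ⟨y, ⟨hyw, hy⟩, rfl⟩
      exact hxw ▸ hb.sumPrefixOnes_le_add_length (hxw.trans hyw.symm) hx hy
  have hattained : ∀ j, m ≤ j → j ≤ m + w.length →
      ∃ w' ∈ factorsOfLength s w.length, sumPrefixOnes w' = j :=
    fun j hmj hjm => hm.ge ⟨hmj, hjm⟩
  obtain ⟨hmw, hwm⟩ : sumPrefixOnes w ∈ Set.Icc m (m + w.length) := hm.le ⟨w, ⟨rfl, hw⟩, rfl⟩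
  have hpos : 0 < w.length := List.length_pos_of_ne_nil hne
  rcases hmw.eq_or_lt with heq | hlt
  · obtain ⟨w', ⟨hl, hw'⟩, h⟩ := hattained (sumPrefixOnes w + 1) (by omega) (by omega)
    exact ⟨w', hw', hb.isSwap_of_sumPrefixOnes_eq_add_one hl.symm hw hw' h⟩
  · obtain ⟨w', ⟨hl, hw'⟩, h⟩ := hattained (sumPrefixOnes w - 1) (by omega) (by omega)
    exact ⟨w', hw', (hb.isSwap_of_sumPrefixOnes_eq_add_one hl hw' hw (by omega)).symm⟩

lemma langComplexity_le_card {α : Type*} [Finite α] {P : List α → Prop}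
    (hP : ∀ v w, P v → P w → v.length = w.length → v = w) {f : List α → α → List α}
    (hf : ∀ v a, (f v a).length = v.length + 1) {n : ℕ} (hn : 1 ≤ n) :
    langComplexity ({w | ∃ v a, P v ∧ w = f v a} ∪ {[]}) n ≤ Nat.card α := by
  have hsubsingleton : {v | v.length + 1 = n ∧ P v}.Subsingleton :=
    fun v hv w hw => hP v w hv.2 hw.2 (Nat.succ_injective (hv.1.trans hw.1.symm))
  have hcover : {w ∈ {w | ∃ v a, P v ∧ w = f v a} ∪ {[]} | w.length = n} ⊆
      f.uncurry '' ({v | v.length + 1 = n ∧ P v} ×ˢ Set.univ) := by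
    rintro _ ⟨⟨v, a, hv, rfl⟩ | rfl, hl⟩
    · exact ⟨(v, a), ⟨⟨(hf v a).symm.trans hl, hv⟩, trivial⟩, rfl⟩
    · exact absurd hl (Nat.ne_of_lt hn)
  have hfin := hsubsingleton.finite.prod (Set.finite_univ (α := α))
  calc langComplexity ({w | ∃ v a, P v ∧ w = f v a} ∪ {[]}) n
      ≤ (f.uncurry '' ({v | v.length + 1 = n ∧ P v} ×ˢ Set.univ)).ncard :=
        Set.ncard_le_ncard hcover (hfin.image _)
    _ ≤ {v | v.length + 1 = n ∧ P v}.ncard * Nat.card α := by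
        rw [← Set.ncard_univ, ← Set.ncard_prod]
        exact Set.ncard_image_le hfin
    _ ≤ Nat.card α :=
        mul_le_of_le_one_left (Nat.zero_le _)
          ((Set.ncard_le_one hsubsingleton.finite).mpr fun _ hv _ hw => hsubsingleton hv hw)

end Factorization

/-- a Sturmian word `s` (a word over `{0,1}` with `p_s(n) = n+1` for all `n`)
belongs to `𝓦₂`: with `S₁ = {va : v right special} ∪ {ε}` and
`S₂ = {av : v left special} ∪ {ε}`, each of `S₁`, `S₂` has at most 2 words of each length
`n ≥ 1`, and every factor of `s` lies in `S₁·S₂`. -/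
theorem stmt12 (s : ℕ → Bool) (hp : ∀ n, complexity s n = n + 1) :
    (∀ n, 1 ≤ n →
      langComplexity ({w : List Bool | ∃ v a, RightSpecial s v ∧ w = v ++ [a]} ∪ {[]}) n ≤ 2) ∧
    (∀ n, 1 ≤ n →
      langComplexity ({w : List Bool | ∃ v a, LeftSpecial s v ∧ w = a :: v} ∪ {[]}) n ≤ 2) ∧
    (∀ w ∈ Factors s,
      ∃ s₁ ∈ ({w : List Bool | ∃ v a, RightSpecial s v ∧ w = v ++ [a]} ∪ {[]} : Set (List Bool)),
        ∃ s₂ ∈ ({w : List Bool | ∃ v a, LeftSpecial s v ∧ w = a :: v} ∪ {[]} : Set (List Bool)),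
          w = s₁ ++ s₂) := by
  have hs : IsSturmian s := hp
  have hcard : Nat.card Bool = 2 := by simp
  refine ⟨fun n hn => ?_, fun n hn => ?_, fun w hw => ?_⟩
  · exact (langComplexity_le_card (fun _ _ => hs.rightSpecial_unique) (by simp) hn).trans_eq hcard
  · exact (langComplexity_le_card (f := fun v a => a :: v)
      (fun _ _ => hs.isBalanced.leftSpecial_unique) (by simp) hn).trans_eq hcard
  · rcases eq_or_ne w [] with rfl | hne
    · exact ⟨[], Or.inr rfl, [], Or.inr rfl, rfl⟩
    obtain ⟨w', hw', v, a, ⟨rfl, rfl⟩ | ⟨z, rfl, rfl⟩⟩ := hs.exists_isSwap hw hne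
    · exact ⟨v ++ [a], Or.inl ⟨v, a, ⟨a, !a, by simp, hw, hw'⟩, rfl⟩, [], Or.inr rfl, by simp⟩
    · have hv : RightSpecial s v := ⟨a, !a, by simp,
        mem_factors_of_infix hw ⟨[], (!a) :: z, by simp⟩,
        mem_factors_of_infix hw' ⟨[], a :: z, by simp⟩⟩
      have hz : LeftSpecial s z := ⟨a, !a, by simp,
        mem_factors_of_infix hw' ⟨v ++ [!a], [], by simp⟩,
        mem_factors_of_infix hw ⟨v ++ [a], [], by simp⟩⟩
      exact ⟨v ++ [a], Or.inl ⟨v, a, hv, rfl⟩, (!a) :: z, Or.inl ⟨z, !a, hz, rfl⟩, by simp⟩
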